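/- In Sym, for every composition I: Λ^I = Σ_{J ⪰ I} (−1)^{|I|−ℓ(J)} S^J and S^I = Σ_{J ⪰ I} (−1)^{|I|−ℓ(J)} Λ^J. In particular the transition matrices between the bases (S^I) and (Λ^I) of each homogeneous component of Sym coincide. -/

import Mathlib

open Finset

namespace NCSF

noncomputable section

/-- `Sym = ℚ⟨S₁,S₂,S₃,…⟩`, the free associative algebra over `ℚ` on countably many
noncommuting generators, the generator of index `n : ℕ` representing `S (n+1)`. -/
abbrev Sym : Type := FreeAlgebra ℚ ℕ

/-- The complete homogeneous noncommutative symmetric functions: `S 0 = 1` and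
`S (n+1)` is the `n`-th generator of the free algebra. -/
def S : ℕ → Sym
  | 0 => 1
  | n + 1 => FreeAlgebra.ι ℚ n

/-- `S^I = S_{i₁} ⋯ S_{i_r}` for a list `I = [i₁, …, i_r]`. -/
def SProd (L : List ℕ) : Sym := (L.map S).prod

/-- The set of partial sums `i₁ + ⋯ + i_k` (`1 ≤ k ≤ length`) of a list. -/
def psums (L : List ℕ) : Finset ℕ :=
  (Finset.range L.length).image fun k => (L.take (k + 1)).sum

/-- The noncommutative ribbon Schur function
`R_I = ∑_{J ⪯ I} (−1)^{ℓ(I)−ℓ(J)} S^J`, the sum being over the compositions `J`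
of `|I|` that are coarser than `I` (every partial sum of `J` is a partial sum of `I`). -/
def Ribbon (L : List ℕ) : Sym :=
  ∑ J : Composition L.sum,
    if psums J.blocks ⊆ psums L then ((-1 : ℚ) ^ (L.length - J.length)) • SProd J.blocks
    else 0


/-- The noncommutative elementary symmetric functions
`Λ_n = ∑_{|J|=n} (−1)^{n−ℓ(J)} S^J`. -/
def Lam (n : ℕ) : Sym :=
  ∑ J : Composition n, ((-1 : ℚ) ^ (n - J.length)) • SProd J.blocks

/-- `Λ^I = Λ_{i₁} ⋯ Λ_{i_r}`. -/
def LamProd (L : List ℕ) : Sym := (L.map Lam).prod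

/-! ### helper material -/

def comps (n : ℕ) : Finset (List ℕ) :=
  (Finset.univ : Finset (Composition n)).image Composition.blocks

theorem mem_comps {n : ℕ} {L : List ℕ} : L ∈ comps n ↔ (∀ x ∈ L, 0 < x) ∧ L.sum = n := by
  unfold comps
  simp only [Finset.mem_image, Finset.mem_univ, true_and]
  constructor
  · rintro ⟨c, rfl⟩
    exact ⟨fun x hx => c.blocks_pos hx, c.blocks_sum⟩
  · rintro ⟨h1, h2⟩
    exact ⟨⟨L, fun {i} hi => h1 i hi, h2⟩, rfl⟩

theorem sum_comps {n : ℕ} (F : List ℕ → Sym) :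
    ∑ J : Composition n, F J.blocks = ∑ L ∈ comps n, F L := by
  unfold comps
  rw [Finset.sum_image]
  intro a _ b _ h
  exact Composition.ext h

theorem psums_nil : psums [] = ∅ := by simp [psums]

theorem mem_psums_cons {a x : ℕ} {L : List ℕ} :
    x ∈ psums (a :: L) ↔ x = a ∨ ∃ y ∈ psums L, x = a + y := by
  simp only [psums, Finset.mem_image, Finset.mem_range, List.length_cons]
  constructor
  · rintro ⟨k, hk, rfl⟩
    cases k with
    | zero => left; simp
    | succ k =>
      right
      exact ⟨_, ⟨k, by omega, rfl⟩, by simp⟩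
  · rintro (rfl | ⟨y, ⟨k, hk, rfl⟩, rfl⟩)
    · exact ⟨0, by omega, by simp⟩
    · exact ⟨k + 1, by omega, by simp⟩

theorem psums_pos {L : List ℕ} (h : ∀ x ∈ L, 0 < x) {x : ℕ} (hx : x ∈ psums L) : 0 < x := by
  cases L with
  | nil => simp [psums_nil] at hx
  | cons a L =>
    have := h a (by simp)
    rcases mem_psums_cons.1 hx with rfl | ⟨y, _, rfl⟩ <;> omega

theorem psums_le {L : List ℕ} {x : ℕ} (hx : x ∈ psums L) : x ≤ L.sum := by
  induction L generalizing x with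
  | nil => simp [psums_nil] at hx
  | cons a L ih =>
    rcases mem_psums_cons.1 hx with rfl | ⟨y, hy, rfl⟩
    · simp
    · have := ih hy
      simp; omega

theorem sum_mem_psums {L : List ℕ} (hL : L ≠ []) : L.sum ∈ psums L := by
  induction L with
  | nil => simp at hL
  | cons a L ih =>
    rw [mem_psums_cons]
    by_cases h : L = []
    · left; simp [h]
    · right; exact ⟨_, ih h, by simp⟩

theorem mem_psums_append {A B : List ℕ} {x : ℕ} :
    x ∈ psums (A ++ B) ↔ x ∈ psums A ∨ ∃ y ∈ psums B, x = A.sum + y := by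
  induction A generalizing x with
  | nil => simp [psums_nil]
  | cons a A ih =>
    rw [List.cons_append, mem_psums_cons, mem_psums_cons]
    constructor
    · rintro (h | ⟨y, hy, rfl⟩)
      · exact Or.inl (Or.inl h)
      · rcases ih.1 hy with h | ⟨z, hz, rfl⟩
        · exact Or.inl (Or.inr ⟨y, h, rfl⟩)
        · exact Or.inr ⟨z, hz, by simp; omega⟩
    · rintro ((h | ⟨y, hy, rfl⟩) | ⟨y, hy, rfl⟩)
      · exact Or.inl h
      · exact Or.inr ⟨y, ih.2 (Or.inl hy), rfl⟩
      · exact Or.inr ⟨A.sum + y, ih.2 (Or.inr ⟨y, hy, rfl⟩), by simp; omega⟩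

theorem exists_split {L : List ℕ} {x : ℕ} (hx : x ∈ psums L) :
    ∃ A B, L = A ++ B ∧ A.sum = x := by
  simp only [psums, Finset.mem_image] at hx
  obtain ⟨k, _, rfl⟩ := hx
  exact ⟨L.take (k + 1), L.drop (k + 1), (List.take_append_drop _ _).symm, rfl⟩

theorem append_inj_of_sum {A A' B B' : List ℕ} (hA : ∀ x ∈ A, 0 < x) (hA' : ∀ x ∈ A', 0 < x)
    (hs : A.sum = A'.sum) (h : A ++ B = A' ++ B') : A = A' ∧ B = B' := by
  induction A generalizing A' with
  | nil =>
    cases A' with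
    | nil => exact ⟨rfl, by simpa using h⟩
    | cons a A' =>
      have := hA' a (by simp)
      simp at hs; omega
  | cons a A ih =>
    cases A' with
    | nil =>
      have := hA a (by simp)
      simp at hs; omega
    | cons a' A' =>
      simp only [List.cons_append, List.cons.injEq] at h
      obtain ⟨rfl, h⟩ := h
      have := ih (A' := A') (fun x hx => hA x (by simp [hx])) (fun x hx => hA' x (by simp [hx]))
        (by simpa using hs) h
      exact ⟨by rw [this.1], this.2⟩

theorem refine_iff {a : ℕ} {I A B : List ℕ} (ha : 0 < a) (hI : ∀ x ∈ I, 0 < x)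
    (hA : A.sum = a) : psums (a :: I) ⊆ psums (A ++ B) ↔ psums I ⊆ psums B := by
  subst hA
  constructor
  · intro h x hx
    have h1 := h (mem_psums_cons.2 (Or.inr ⟨x, hx, rfl⟩))
    have hp := psums_pos hI hx
    rcases mem_psums_append.1 h1 with h2 | ⟨y, hy, h3⟩
    · have := psums_le h2
      omega
    · have : x = y := by omega
      exact this ▸ hy
  · intro h x hx
    rcases mem_psums_cons.1 hx with rfl | ⟨y, hy, rfl⟩
    · refine mem_psums_append.2 (Or.inl (sum_mem_psums ?_))
      rintro rfl
      simp at ha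
    · exact mem_psums_append.2 (Or.inr ⟨y, h hy, rfl⟩)

def U (g : ℕ → Sym) (n : ℕ) : Sym := ∑ L ∈ comps n, (L.map g).prod

theorem prod_U (g : ℕ → Sym) (I : List ℕ) (hI : ∀ x ∈ I, 0 < x) :
    (I.map (U g)).prod
      = ∑ L ∈ (comps I.sum).filter (fun L => psums I ⊆ psums L), (L.map g).prod := by
  induction I with
  | nil =>
    have : (comps ([] : List ℕ).sum).filter (fun L => psums [] ⊆ psums L) = {[]} := by
      ext L
      simp only [Finset.mem_filter, mem_comps, psums_nil, Finset.empty_subset, and_true,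
        Finset.mem_singleton, List.sum_nil]
      constructor
      · rintro ⟨h1, h2⟩
        cases L with
        | nil => rfl
        | cons a L =>
          have := h1 a (by simp)
          simp at h2; omega
      · rintro rfl; simp
    rw [this]; simp
  | cons a I ih =>
    have ha : 0 < a := hI a (by simp)
    have hI' : ∀ x ∈ I, 0 < x := fun x hx => hI x (by simp [hx])
    rw [List.map_cons, List.prod_cons, ih hI', U, Finset.sum_mul_sum, ← Finset.sum_product']
    refine Finset.sum_bij (fun p _ => p.1 ++ p.2) ?_ ?_ ?_ ?_
    · rintro ⟨A, B⟩ h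
      simp only [Finset.mem_product, Finset.mem_filter, mem_comps] at h ⊢
      obtain ⟨⟨h1, h2⟩, ⟨h3, h4⟩, h5⟩ := h
      refine ⟨⟨?_, by simp [h2, h4]⟩, (refine_iff ha hI' h2).2 h5⟩
      intro x hx
      rcases List.mem_append.1 hx with h | h
      · exact h1 x h
      · exact h3 x h
    · rintro ⟨A, B⟩ h ⟨A', B'⟩ h' heq
      simp only [Finset.mem_product, Finset.mem_filter, mem_comps] at h h' heq
      have := append_inj_of_sum h.1.1 h'.1.1 (h.1.2.trans h'.1.2.symm) heq
      rw [this.1, this.2]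
    · intro L hL
      simp only [Finset.mem_filter, mem_comps] at hL
      obtain ⟨⟨h1, h2⟩, h3⟩ := hL
      obtain ⟨A, B, rfl, hs⟩ := exists_split (h3 (mem_psums_cons.2 (Or.inl rfl)))
      refine ⟨(A, B), ?_, rfl⟩
      simp only [Finset.mem_product, Finset.mem_filter, mem_comps]
      refine ⟨⟨fun x hx => h1 x (by simp [hx]), hs⟩,
        ⟨fun x hx => h1 x (by simp [hx]), ?_⟩, (refine_iff ha hI' hs).1 h3⟩
      simp at h2; omega
    · rintro ⟨A, B⟩ _
      simp

theorem U_zero (g : ℕ → Sym) : U g 0 = 1 := by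
  have := prod_U g [] (by simp)
  simp [psums_nil] at this
  exact this.symm

theorem U_succ (g : ℕ → Sym) (n : ℕ) :
    U g (n + 1) = ∑ p ∈ Finset.HasAntidiagonal.antidiagonal n, g (p.1 + 1) * U g p.2 := by
  simp only [U, Finset.mul_sum]
  rw [Finset.sum_sigma']
  symm
  refine Finset.sum_bij (fun p _ => (p.1.1 + 1) :: p.2) ?_ ?_ ?_ ?_
  · rintro ⟨⟨i, j⟩, L⟩ h
    simp only [Finset.mem_sigma, Finset.HasAntidiagonal.mem_antidiagonal, mem_comps] at h ⊢
    obtain ⟨h1, h2, h3⟩ := h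
    refine ⟨?_, by simp; omega⟩
    intro x hx
    rcases List.mem_cons.1 hx with rfl | h
    · omega
    · exact h2 x h
  · rintro ⟨⟨i, j⟩, L⟩ h ⟨⟨i', j'⟩, L'⟩ h' heq
    simp only [Finset.mem_sigma, Finset.HasAntidiagonal.mem_antidiagonal, mem_comps, List.cons.injEq] at h h' heq
    obtain ⟨h1, rfl⟩ := heq
    have e1 : i = i' := by omega
    have e2 : j = j' := by omega
    subst e1 e2
    rfl
  · intro L hL
    rw [mem_comps] at hL
    obtain ⟨h1, h2⟩ := hL
    cases L with
    | nil => simp at h2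
    | cons a L =>
      have ha := h1 a (by simp)
      simp only [List.sum_cons] at h2
      refine ⟨⟨(a - 1, L.sum), L⟩, ?_, ?_⟩
      · simp only [Finset.mem_sigma, Finset.HasAntidiagonal.mem_antidiagonal, mem_comps]
        exact ⟨by omega, fun x hx => h1 x (by simp [hx]), trivial⟩
      · simp only [List.cons.injEq, and_true]; omega
  · rintro ⟨⟨i, j⟩, L⟩ _
    simp

def sg (f : ℕ → Sym) (k : ℕ) : Sym := ((-1 : ℚ) ^ (k - 1)) • f k

theorem length_le {L : List ℕ} (h : ∀ x ∈ L, 0 < x) : L.length ≤ L.sum := by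
  induction L with
  | nil => simp
  | cons a L ih =>
    have := h a (by simp)
    have := ih (fun x hx => h x (by simp [hx]))
    simp; omega

theorem sign_prod (f : ℕ → Sym) (L : List ℕ) (h : ∀ x ∈ L, 0 < x) :
    ((-1 : ℚ) ^ (L.sum - L.length)) • (L.map f).prod = (L.map (sg f)).prod := by
  induction L with
  | nil => simp
  | cons a L ih =>
    have ha := h a (by simp)
    have h' : ∀ x ∈ L, 0 < x := fun x hx => h x (by simp [hx])
    have hl := length_le h'
    rw [List.map_cons, List.prod_cons, List.map_cons, List.prod_cons, ← ih h', sg,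
      smul_mul_smul_comm, ← pow_add]
    congr 2
    simp; omega

/-- the transform `f ↦ T f` -/
def T (f : ℕ → Sym) : ℕ → Sym := U (sg f)

theorem T_zero (f : ℕ → Sym) : T f 0 = 1 := U_zero _

theorem Lam_eq : Lam = T S := by
  funext n
  unfold Lam T U SProd
  simp only [Composition.length]
  rw [sum_comps (fun L => ((-1 : ℚ) ^ (n - L.length)) • (L.map S).prod)]
  refine Finset.sum_congr rfl fun L hL => ?_
  obtain ⟨h1, rfl⟩ := mem_comps.1 hL
  exact sign_prod S L h1

theorem prod_T (f : ℕ → Sym) (n : ℕ) (I : Composition n) :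
    (I.blocks.map (T f)).prod =
      ∑ J : Composition n,
        if psums I.blocks ⊆ psums J.blocks then
          ((-1 : ℚ) ^ (n - J.length)) • (J.blocks.map f).prod
        else 0 := by
  unfold T
  rw [prod_U _ _ (fun x hx => I.blocks_pos hx), I.blocks_sum]
  simp only [Composition.length]
  rw [sum_comps (fun L => if psums I.blocks ⊆ psums L then
    ((-1 : ℚ) ^ (n - L.length)) • (L.map f).prod else 0), Finset.sum_filter]
  refine Finset.sum_congr rfl fun L hL => ?_
  obtain ⟨h1, h2⟩ := mem_comps.1 hL
  split_ifs
  · rw [← h2]; exact (sign_prod f L h1).symm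
  · rfl

open PowerSeries in
theorem T_series (f : ℕ → Sym) (hf : f 0 = 1) :
    PowerSeries.mk (fun n => ((-1 : ℚ) ^ n) • f n) * PowerSeries.mk (T f) = 1 := by
  ext n
  rw [PowerSeries.coeff_mul]
  simp only [PowerSeries.coeff_mk]
  cases n with
  | zero => simp [hf, T_zero]
  | succ n =>
    rw [Finset.Nat.sum_antidiagonal_succ]
    simp only [hf, pow_zero, one_smul, one_mul]
    rw [T, U_succ, ← Finset.sum_add_distrib]
    simp only [PowerSeries.coeff_one, Nat.succ_ne_zero, if_false]
    refine Finset.sum_eq_zero fun p _ => ?_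
    rw [← add_mul, sg, ← add_smul]
    simp [pow_succ]

theorem T_series' (f : ℕ → Sym) (hf : f 0 = 1) :
    PowerSeries.mk f * PowerSeries.mk (fun n => ((-1 : ℚ) ^ n) • T f n) = 1 := by
  have h := T_series f hf
  ext n
  have h1 := congrArg (PowerSeries.coeff n) h
  rw [PowerSeries.coeff_mul] at h1 ⊢
  simp only [PowerSeries.coeff_mk] at h1 ⊢
  have h2 := congrArg (fun z : Sym => ((-1 : ℚ) ^ n) • (z : Sym)) h1
  simp only [Finset.smul_sum] at h2
  have h3 : ((-1 : ℚ) ^ n) • (PowerSeries.coeff n (1 : PowerSeries Sym))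
      = PowerSeries.coeff n (1 : PowerSeries Sym) := by
    rw [PowerSeries.coeff_one]
    split_ifs with h0
    · simp [h0]
    · simp
  rw [h3] at h2
  rw [← h2]
  refine Finset.sum_congr rfl fun p hp => ?_
  rw [← Finset.HasAntidiagonal.mem_antidiagonal.1 hp, smul_mul_assoc, smul_smul, mul_smul_comm]
  congr 1
  rw [pow_add, mul_right_comm, ← mul_pow]
  simp

theorem T_T (f : ℕ → Sym) (hf : f 0 = 1) : T (T f) = f := by
  have h := left_inv_eq_right_inv (T_series' f hf) (T_series (T f) (T_zero f))
  funext n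
  have := congrArg (PowerSeries.coeff n) h
  simpa using this.symm

/-- **Transition between the bases `S^I` and `Λ^I`**: for every composition `I` of `n`,
`Λ^I = ∑_{J ⪰ I} (−1)^{|I|−ℓ(J)} S^J` and `S^I = ∑_{J ⪰ I} (−1)^{|I|−ℓ(J)} Λ^J`,
the sums being over the compositions `J` of `n` refining `I`
(every partial sum of `I` is a partial sum of `J`).  In particular the two transition
matrices coincide. -/
theorem lambda_S_transition (n : ℕ) (I : Composition n) :
    (LamProd I.blocks =
      ∑ J : Composition n,
        if psums I.blocks ⊆ psums J.blocks then
          ((-1 : ℚ) ^ (n - J.length)) • SProd J.blocks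
        else 0) ∧
    (SProd I.blocks =
      ∑ J : Composition n,
        if psums I.blocks ⊆ psums J.blocks then
          ((-1 : ℚ) ^ (n - J.length)) • LamProd J.blocks
        else 0) := by
  refine ⟨?_, ?_⟩
  · unfold LamProd SProd
    rw [Lam_eq]
    exact prod_T S n I
  · unfold LamProd SProd
    have h : S = T Lam := by rw [Lam_eq, T_T S rfl]
    conv_lhs => rw [h]
    exact prod_T Lam n I

end

end NCSF
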